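/- Let f ∈ ℂ[x,y,z,w] be a reduced homogeneous polynomial of degree d defining a surface D: f = 0 in P³, tame with respect to the pair ρ1, ρ2 of degrees e1 = deg ρ1 ≤ e2 = deg ρ2, and set e3 = d − 1 − e1 − e2. Define v': AR(f) → S by letting v'(ρ) be the unique polynomial h with det M(E,ρ1,ρ2,ρ) = h·f, where M(E,ρ1,ρ2,ρ) is the 4×4 matrix with rows (x,y,z,w), ρ1, ρ2, ρ. Then: (i) the map (a,b) ↦ a·ρ1 + b·ρ2 from S² to AR(f) is injective; (ii) if ρ is homogeneous of degree e then v'(ρ) is homogeneous of degree e − e3; and (iii) v'(ρ) = 0 if and only if ρ ∈ S·ρ1 + S·ρ2. In other words, there is an exact sequence of graded S-modules 0 → S(−e1) ⊕ S(−e2) → AR(f) → S(−e3). -/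

import Mathlib

open MvPolynomial Matrix

noncomputable section

/-- The polynomial ring `S = ℂ[x,y,z,w]`. -/
abbrev S4 : Type := MvPolynomial (Fin 4) ℂ

/-- The `S`-linear map sending `ρ = (α,β,γ,δ)` to `α fₓ + β f_y + γ f_z + δ f_w`. -/
def jacPair (f : S4) : (Fin 4 → S4) →ₗ[S4] S4 where
  toFun ρ := ∑ i, ρ i * pderiv i f
  map_add' a b := by simp [add_mul, Finset.sum_add_distrib]
  map_smul' c a := by simp [Finset.mul_sum, mul_assoc]

/-- `AR(f)`: the `S`-module of all Jacobian syzygies of `f`. -/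
def AR4 (f : S4) : Submodule S4 (Fin 4 → S4) := LinearMap.ker (jacPair f)

/-- A vector of polynomials is homogeneous of degree `q` if each component is. -/
def VecHomog (ρ : Fin 4 → S4) (q : ℕ) : Prop := ∀ i, (ρ i).IsHomogeneous q

/-- `AR(f)_k`, the degree-`k` homogeneous part of `AR(f)`, as a `ℂ`-subspace. -/
def ARgr (f : S4) (k : ℕ) : Submodule ℂ (Fin 4 → S4) :=
  (AR4 f).restrictScalars ℂ ⊓ Submodule.pi Set.univ (fun _ => homogeneousSubmodule (Fin 4) ℂ k)

/-- `ar(f)_k = dim_ℂ AR(f)_k`. -/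
def arDim (f : S4) (k : ℕ) : ℕ := Module.finrank ℂ (ARgr f k)

/-- `ar(f)_q` for an integer index, with the convention that it vanishes for `q < 0`. -/
def arZ (f : S4) (q : ℤ) : ℕ := if 0 ≤ q then arDim f q.toNat else 0

/-- The Jacobian ideal of `f`. -/
def JacIdeal (f : S4) : Ideal S4 := Ideal.span (Set.range fun i : Fin 4 => pderiv i f)

/-- `m(f)_k = dim_ℂ M(f)_k`, the dimension of the degree-`k` part of the Milnor algebra. -/
def milnor4 (f : S4) (k : ℕ) : ℕ :=
  Module.finrank ℂ ((homogeneousSubmodule (Fin 4) ℂ k).map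
    (Submodule.mkQ ((JacIdeal f).restrictScalars ℂ)))

/-- `binom(m,3)` with the convention that it is `0` for `m < 3`. -/
def binom3 (m : ℤ) : ℕ := m.toNat.choose 3

/-- All four `3×3` minors of the `3×4` matrix with rows `ρ1, ρ2, ρ` vanish. -/
def MinorsVanish3 (ρ1 ρ2 ρ : Fin 4 → S4) : Prop :=
  ∀ j : Fin 4,
    (Matrix.of fun i k => ![ρ1, ρ2, ρ] i (j.succAbove k) : Matrix (Fin 3) (Fin 3) S4).det = 0

/-- `D : f = 0` is tame with respect to `ρ1, ρ2`: every homogeneous syzygy `ρ` for which all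
`3×3` minors of the matrix with rows `ρ1, ρ2, ρ` vanish lies in `S·ρ1 + S·ρ2`. -/
def TamePair (f : S4) (ρ1 ρ2 : Fin 4 → S4) : Prop :=
  ∀ ρ ∈ AR4 f, ∀ q : ℕ, VecHomog ρ q → MinorsVanish3 ρ1 ρ2 ρ →
    ∃ a b : S4, ρ = a • ρ1 + b • ρ2

/-- `ρ1` is a nonzero homogeneous syzygy of minimal degree `e1`, and `ρ2` is a homogeneous
syzygy of minimal degree `e2 ≥ e1` among the homogeneous syzygies not in `S·ρ1`. -/
def MinimalPair (f : S4) (ρ1 ρ2 : Fin 4 → S4) (e1 e2 : ℕ) : Prop :=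
  ρ1 ∈ AR4 f ∧ ρ1 ≠ 0 ∧ VecHomog ρ1 e1 ∧
  (∀ ρ ∈ AR4 f, ∀ q : ℕ, ρ ≠ 0 → VecHomog ρ q → e1 ≤ q) ∧
  ρ2 ∈ AR4 f ∧ VecHomog ρ2 e2 ∧ e1 ≤ e2 ∧ (∀ a : S4, ρ2 ≠ a • ρ1) ∧
  (∀ ρ ∈ AR4 f, ∀ q : ℕ, VecHomog ρ q → (∀ a : S4, ρ ≠ a • ρ1) → e2 ≤ q)

/-- `D : f = 0` is a free surface with exponents `d1 ≤ d2 ≤ d3`: `AR(f)` is a free graded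
`S`-module with a homogeneous basis of degrees `d1, d2, d3`. -/
def IsFreeWith (f : S4) (d1 d2 d3 : ℕ) : Prop :=
  d1 ≤ d2 ∧ d2 ≤ d3 ∧
  ∃ ρ1 ρ2 ρ3 : Fin 4 → S4,
    ρ1 ∈ AR4 f ∧ ρ2 ∈ AR4 f ∧ ρ3 ∈ AR4 f ∧
    VecHomog ρ1 d1 ∧ VecHomog ρ2 d2 ∧ VecHomog ρ3 d3 ∧
    (∀ ρ ∈ AR4 f, ∃ a b c : S4, ρ = a • ρ1 + b • ρ2 + c • ρ3) ∧
    (∀ a b c : S4, a • ρ1 + b • ρ2 + c • ρ3 = 0 → a = 0 ∧ b = 0 ∧ c = 0)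

/-- `D : f = 0` is a nearly free surface with exponents `d1 ≤ d2 ≤ d3` (`d4 = d3`):
`AR(f)` is generated by four homogeneous syzygies of degrees `d1, d2, d3, d3`,
with `d3 = d - (d1 + d2)`, whose module of relations is generated by a single relation
`a₁ρ₁ + a₂ρ₂ + a₃ρ₃ + a₄ρ₄ = 0` with `a₁, a₂, a₃, a₄` homogeneous of degrees
`d3-d1+1, d3-d2+1, 1, 1`. -/
def IsNearlyFreeWith (f : S4) (d d1 d2 d3 : ℕ) : Prop :=
  d1 ≤ d2 ∧ d2 ≤ d3 ∧ d1 + d2 + d3 = d ∧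
  ∃ (ρ : Fin 4 → Fin 4 → S4) (a : Fin 4 → S4),
    (∀ i, ρ i ∈ AR4 f) ∧
    VecHomog (ρ 0) d1 ∧ VecHomog (ρ 1) d2 ∧ VecHomog (ρ 2) d3 ∧ VecHomog (ρ 3) d3 ∧
    (∀ σ ∈ AR4 f, ∃ b : Fin 4 → S4, σ = ∑ i, b i • ρ i) ∧
    (a 0).IsHomogeneous (d3 - d1 + 1) ∧ (a 1).IsHomogeneous (d3 - d2 + 1) ∧
    (a 2).IsHomogeneous 1 ∧ (a 3).IsHomogeneous 1 ∧
    a ≠ 0 ∧ (∑ i, a i • ρ i) = 0 ∧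
    (∀ b : Fin 4 → S4, (∑ i, b i • ρ i) = 0 → ∃ c : S4, b = c • a)

/-- `D : f = 0` is tame: it is tame with respect to some pair `ρ1, ρ2` chosen as in the paper. -/
def IsTame (f : S4) : Prop :=
  ∃ (ρ1 ρ2 : Fin 4 → S4) (e1 e2 : ℕ), MinimalPair f ρ1 ρ2 e1 e2 ∧ TamePair f ρ1 ρ2

/-- The `4×4` matrix with rows the Euler vector field `(x,y,z,w)` and `ρ1, ρ2, ρ`. -/
def EMat (ρ1 ρ2 ρ : Fin 4 → S4) : Matrix (Fin 4) (Fin 4) S4 :=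
  Matrix.of ![fun i => X i, ρ1, ρ2, ρ]

/-!
Write `E = (x, y, z, w)`. By Euler's identity the matrix `M(E, ρ1, ρ2, ρ)` sends `∇f` to
`(d f, 0, 0, 0)`. Multiplying by the adjugate shows that `d f` times each `3 × 3` minor of
`ρ1, ρ2, ρ` is, up to sign, a multiple of `det M`; so all these minors vanish as soon as `det M`
does, and tameness puts `ρ` into `S ρ1 + S ρ2` when `ρ` is homogeneous. The general case reduces
to this one because `AR(f)` and the kernel of `ρ ↦ det M` are both orthogonal complements of
vectors of forms of equal degree, hence graded.

A nontrivial relation between `ρ1` and `ρ2` would make them multiples `p τ` and `q τ` of a common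
vector `τ`, which is again a syzygy. Since `ρ1` has minimal degree, `p` is then a unit, and
`ρ2 ∈ S ρ1`.
-/

section HomogeneousComponents

variable {σ ι R : Type*} [CommSemiring R]

attribute [local instance] MvPolynomial.gradedAlgebra in
lemma homogeneousComponent_add_mul {g : MvPolynomial σ R} {m : ℕ} (hg : g.IsHomogeneous m)
    (p : MvPolynomial σ R) (k : ℕ) :
    homogeneousComponent (k + m) (p * g) = homogeneousComponent k p * g := by
  have h := DirectSum.coe_decompose_mul_add_of_right_mem (homogeneousSubmodule σ R) (i := k)
    (a := p) hg
  rwa [← DirectSum.Decomposition.decompose'_eq, decomposition.decompose'_apply,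
    decomposition.decompose'_apply] at h

lemma isHomogeneous_of_mul_right [NoZeroDivisors R] {p g : MvPolynomial σ R} {m n : ℕ}
    (hg : g.IsHomogeneous m) (hg0 : g ≠ 0) (hpg : (p * g).IsHomogeneous n) :
    p.IsHomogeneous (n - m) := by
  have component_eq_zero (k : ℕ) (hk : k + m ≠ n) : homogeneousComponent k p = 0 := by
    have h := homogeneousComponent_add_mul hg p k
    rw [homogeneousComponent_of_mem hpg, if_neg hk] at h
    exact (mul_eq_zero.1 h.symm).resolve_right hg0
  rw [← sum_homogeneousComponent p]
  refine IsHomogeneous.sum _ _ _ fun k _ => ?_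
  by_cases hk : k + m = n
  · rw [← Nat.eq_sub_of_add_eq hk]
    exact homogeneousComponent_isHomogeneous k p
  · rw [component_eq_zero k hk]
    exact isHomogeneous_zero _ _ _

lemma homogeneousComponent_add_dotProduct [Fintype ι] {c : ι → MvPolynomial σ R} {m : ℕ}
    (hc : ∀ i, (c i).IsHomogeneous m) (v : ι → MvPolynomial σ R) (k : ℕ) :
    homogeneousComponent (k + m) (v ⬝ᵥ c) = (homogeneousComponent k ∘ v) ⬝ᵥ c := by
  simp only [dotProduct, map_sum, homogeneousComponent_add_mul (hc _), Function.comp_apply]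

lemma exists_sum_homogeneousComponent_comp_eq [Finite ι]
    (v : ι → MvPolynomial σ R) : ∃ N, ∑ k ∈ Finset.range N, homogeneousComponent k ∘ v = v := by
  have := Fintype.ofFinite ι
  refine ⟨Finset.univ.sup (fun i => (v i).totalDegree) + 1, funext fun i => ?_⟩
  have hi : (v i).totalDegree ≤ Finset.univ.sup fun i => (v i).totalDegree :=
    Finset.le_sup (f := fun i => (v i).totalDegree) (Finset.mem_univ i)
  conv_rhs => rw [← sum_homogeneousComponent (v i)]
  rw [Finset.sum_apply]
  refine (Finset.sum_subset (Finset.range_subset_range.2 (by omega)) fun k _ hk => ?_).symm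
  exact homogeneousComponent_eq_zero _ _ (by simpa using hk)

lemma mem_of_forall_homogeneousComponent_comp_mem [Finite ι]
    {N : Submodule (MvPolynomial σ R) (ι → MvPolynomial σ R)} {v : ι → MvPolynomial σ R}
    (h : ∀ k, homogeneousComponent k ∘ v ∈ N) : v ∈ N := by
  obtain ⟨n, hn⟩ := exists_sum_homogeneousComponent_comp_eq v
  rw [← hn]
  exact N.sum_mem fun k _ => h k

end HomogeneousComponents

section Determinants

variable {σ ι R : Type*} [CommRing R] [Fintype ι] [DecidableEq ι]

lemma isHomogeneous_det {A : Matrix ι ι (MvPolynomial σ R)} {w : ι → ℕ}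
    (hA : ∀ i j, (A i j).IsHomogeneous (w i)) : A.det.IsHomogeneous (∑ i, w i) := by
  rw [← det_transpose, det_apply']
  refine IsHomogeneous.sum _ _ _ fun s _ => ?_
  rw [← map_intCast (C : R →+* MvPolynomial σ R)]
  exact (IsHomogeneous.prod _ _ _ fun i _ => hA i (s i)).C_mul _

lemma isHomogeneous_adjugate {A : Matrix ι ι (MvPolynomial σ R)} {w : ι → ℕ} {i : ι}
    (hA : ∀ k ≠ i, ∀ j, (A k j).IsHomogeneous (w k)) (j : ι) :
    (A.adjugate j i).IsHomogeneous (∑ k ∈ Finset.univ.erase i, w k) := by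
  have hrows (k l : ι) :
      (A.updateRow i (Pi.single j 1) k l).IsHomogeneous (Function.update w i 0 k) := by
    rcases eq_or_ne k i with rfl | hk
    · rw [updateRow_self, Function.update_self, Pi.single_apply]
      split_ifs
      exacts [isHomogeneous_one _ _, isHomogeneous_zero _ _ _]
    · rw [updateRow_ne hk, Function.update_of_ne hk]
      exact hA k hk l
  have hsum : ∑ k, Function.update w i 0 k = ∑ k ∈ Finset.univ.erase i, w k := by
    rw [Finset.sum_update_of_mem (Finset.mem_univ i), zero_add, Finset.sdiff_singleton_eq_erase]
  rw [adjugate_apply, ← hsum]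
  exact isHomogeneous_det hrows

lemma det_updateRow_eq_dotProduct_adjugate (A : Matrix ι ι R) (i : ι) (v : ι → R) :
    (A.updateRow i v).det = v ⬝ᵥ fun j => A.adjugate j i := by
  rw [← cramer_transpose_apply, cramer_eq_adjugate_mulVec, ← adjugate_transpose]
  exact dotProduct_comm _ _

lemma det_updateRow_homogeneousComponent {A : Matrix ι ι (MvPolynomial σ R)} {w : ι → ℕ} {i : ι}
    (hA : ∀ k ≠ i, ∀ j, (A k j).IsHomogeneous (w k)) (q : ℕ) :
    (A.updateRow i (homogeneousComponent q ∘ A i)).det =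
      homogeneousComponent (q + ∑ k ∈ Finset.univ.erase i, w k) A.det := by
  rw [det_updateRow_eq_dotProduct_adjugate,
    ← homogeneousComponent_add_dotProduct (isHomogeneous_adjugate hA),
    ← det_updateRow_eq_dotProduct_adjugate, updateRow_eq_self]

lemma det_submatrix_succ_succAbove_eq_zero {S : Type*} [CommRing S] [NoZeroDivisors S] {n : ℕ}
    {A : Matrix (Fin (n + 1)) (Fin (n + 1)) S} {v : Fin (n + 1) → S} {c : S}
    (hv : A *ᵥ v = Pi.single 0 c) (hc : c ≠ 0) (hdet : A.det = 0) (j : Fin (n + 1)) :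
    (A.submatrix Fin.succ j.succAbove).det = 0 := by
  have hadj : A.adjugate *ᵥ Pi.single 0 c = 0 := by
    rw [← hv, mulVec_mulVec, adjugate_mul, hdet, zero_smul, zero_mulVec]
  have hj : A.adjugate j 0 * c = 0 := by
    simpa [mulVec_single] using congrFun hadj j
  have hminor := (mul_eq_zero.1 hj).resolve_right hc
  rw [adjugate_fin_succ_eq_det_submatrix] at hminor
  exact (isUnit_one.neg.pow _).mul_right_eq_zero.1 hminor

end Determinants

section Syzygies

variable {σ R : Type*} [CommSemiring R] [Fintype σ]

/-- The module `AR(f)` of Jacobian syzygies of `f`, for any finite set of variables and any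
commutative semiring of coefficients: the vectors `ρ` with `∑ i, ρ i * ∂f/∂xᵢ = 0`. -/
def jacobianSyzygies (f : MvPolynomial σ R) :
    Submodule (MvPolynomial σ R) (σ → MvPolynomial σ R) :=
  LinearMap.ker (Fintype.linearCombination (MvPolynomial σ R) fun i => pderiv i f)

variable {f : MvPolynomial σ R} {ρ : σ → MvPolynomial σ R}

lemma mem_jacobianSyzygies : ρ ∈ jacobianSyzygies f ↔ (ρ ⬝ᵥ fun i => pderiv i f) = 0 :=
  Iff.rfl

lemma homogeneousComponent_comp_mem_jacobianSyzygies {d : ℕ} (hf : f.IsHomogeneous d)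
    (hρ : ρ ∈ jacobianSyzygies f) (k : ℕ) : homogeneousComponent k ∘ ρ ∈ jacobianSyzygies f := by
  rw [mem_jacobianSyzygies] at hρ ⊢
  rw [← homogeneousComponent_add_dotProduct (fun i => hf.pderiv) ρ k, hρ, map_zero]

lemma mem_jacobianSyzygies_of_smul_mem [NoZeroDivisors R] {p : MvPolynomial σ R} (hp : p ≠ 0)
    (hρ : p • ρ ∈ jacobianSyzygies f) : ρ ∈ jacobianSyzygies f := by
  rw [mem_jacobianSyzygies, smul_dotProduct, smul_eq_mul] at hρ
  exact mem_jacobianSyzygies.2 ((mul_eq_zero.1 hρ).resolve_left hp)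

end Syzygies

section Independence

lemma exists_eq_smul_of_smul_add_smul_eq_zero {ι R : Type*} [CommRing R] [IsDomain R]
    [UniqueFactorizationMonoid R] {u v : ι → R} {a b : R} (hb : b ≠ 0)
    (h : a • u + b • v = 0) : ∃ (p q : R) (w : ι → R), u = p • w ∧ v = q • w := by
  obtain ⟨a', b', c, hrel, rfl, rfl⟩ := UniqueFactorizationMonoid.exists_reduced_factors' a b hb
  obtain ⟨hc, hb'⟩ := mul_ne_zero_iff.1 hb
  have hreduced (i : ι) : a' * u i + b' * v i = 0 := by
    have hi : c * a' * u i + c * b' * v i = 0 := congrFun h i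
    exact mul_left_cancel₀ hc (by linear_combination hi)
  have hdvd (i : ι) : b' ∣ u i :=
    hrel.symm.dvd_of_dvd_mul_left ⟨-v i, by linear_combination hreduced i⟩
  choose w hw using hdvd
  refine ⟨b', -a', w, funext hw, funext fun i => mul_left_cancel₀ hb' ?_⟩
  rw [Pi.smul_apply, smul_eq_mul]
  linear_combination hreduced i - a' * hw i

variable {σ K : Type*} [Field K] [Fintype σ] {f : MvPolynomial σ K} {d e : ℕ}

lemma isUnit_of_smul_jacobianSyzygy_of_minimal (hf : f.IsHomogeneous d)
    (hmin : ∀ ρ ∈ jacobianSyzygies f, ∀ q : ℕ, ρ ≠ 0 → (∀ i, (ρ i).IsHomogeneous q) → e ≤ q)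
    {p : MvPolynomial σ K} {ρ : σ → MvPolynomial σ K} (hρ : p • ρ ∈ jacobianSyzygies f)
    (hρ0 : p • ρ ≠ 0) (hhom : ∀ i, ((p • ρ) i).IsHomogeneous e) : IsUnit p := by
  obtain ⟨i, hi⟩ := Function.ne_iff.1 hρ0
  obtain ⟨hp, hρi⟩ : p ≠ 0 ∧ ρ i ≠ 0 := mul_ne_zero_iff.1 hi
  have hle : e ≤ (ρ i).totalDegree := by
    obtain ⟨k, hk, hki⟩ : ∃ k ∈ Finset.range ((ρ i).totalDegree + 1),
        homogeneousComponent k (ρ i) ≠ 0 :=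
      Finset.exists_ne_zero_of_sum_ne_zero (by rwa [sum_homogeneousComponent])
    have hek : e ≤ k := hmin _
      (homogeneousComponent_comp_mem_jacobianSyzygies hf
        (mem_jacobianSyzygies_of_smul_mem hp hρ) k) k
      (Function.ne_iff.2 ⟨i, hki⟩) fun j => homogeneousComponent_isHomogeneous k (ρ j)
    exact hek.trans (Nat.lt_succ_iff.1 (Finset.mem_range.1 hk))
  have hdeg : e = p.totalDegree + (ρ i).totalDegree := by
    rw [← (hhom i).totalDegree hi]
    exact totalDegree_mul_of_isDomain hp hρi
  have hconst : p = C (p.coeff 0) := totalDegree_eq_zero_iff_eq_C.1 (by omega)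
  refine isUnit_iff_eq_C_of_isReduced.2 ⟨p.coeff 0, IsUnit.mk0 _ fun h0 => hp ?_, hconst⟩
  rw [hconst, h0, map_zero]

lemma linearIndependent_pair_of_minimal_jacobianSyzygy (hf : f.IsHomogeneous d)
    {ρ1 ρ2 : σ → MvPolynomial σ K} (h1 : ρ1 ∈ jacobianSyzygies f) (h10 : ρ1 ≠ 0)
    (hhom1 : ∀ i, (ρ1 i).IsHomogeneous e)
    (hmin1 : ∀ ρ ∈ jacobianSyzygies f, ∀ q : ℕ, ρ ≠ 0 → (∀ i, (ρ i).IsHomogeneous q) → e ≤ q)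
    (h21 : ∀ a : MvPolynomial σ K, ρ2 ≠ a • ρ1) :
    LinearIndependent (MvPolynomial σ K) ![ρ1, ρ2] := by
  refine LinearIndependent.pair_iff.2 fun a b hab => ?_
  have hb : b = 0 := by
    by_contra hb
    obtain ⟨p, q, τ, rfl, rfl⟩ := exists_eq_smul_of_smul_add_smul_eq_zero hb hab
    obtain ⟨r, hr⟩ :=
      (isUnit_of_smul_jacobianSyzygy_of_minimal hf hmin1 h1 h10 hhom1).exists_left_inv
    exact h21 (q * r) (by rw [smul_smul, mul_assoc, hr, mul_one])
  rw [hb, zero_smul, add_zero] at hab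
  exact ⟨(smul_eq_zero.1 hab).resolve_right h10, hb⟩

end Independence

section EulerMatrix

variable {R : Type*} [CommRing R]

/-- The matrix `M(E, ρ₁, …, ρₙ)` over a polynomial ring in `n + 1` variables, whose first row is
the Euler vector field `E = (x₀, …, xₙ)` and whose other rows are the given vectors. -/
def eulerMatrix {n : ℕ} (ρ : Fin n → Fin (n + 1) → MvPolynomial (Fin (n + 1)) R) :
    Matrix (Fin (n + 1)) (Fin (n + 1)) (MvPolynomial (Fin (n + 1)) R) :=
  Matrix.of (vecCons X ρ)

section AnyDimension

variable {n : ℕ} {f : MvPolynomial (Fin (n + 1)) R}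
  {ρ : Fin n → Fin (n + 1) → MvPolynomial (Fin (n + 1)) R}

lemma isHomogeneous_det_eulerMatrix {e : Fin n → ℕ} (hρ : ∀ i j, (ρ i j).IsHomogeneous (e i)) :
    (eulerMatrix ρ).det.IsHomogeneous (1 + ∑ i, e i) := by
  rw [← Fin.sum_cons]
  refine isHomogeneous_det fun i => ?_
  cases i using Fin.cases with
  | zero => exact fun j => isHomogeneous_X R j
  | succ i => exact hρ i

lemma eulerMatrix_mulVec_pderiv {d : ℕ} (hf : f.IsHomogeneous d)
    (hρ : ∀ i, ρ i ∈ jacobianSyzygies f) :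
    (eulerMatrix ρ *ᵥ fun i => pderiv i f) = Pi.single 0 (d • f) := by
  ext1 i
  cases i using Fin.cases with
  | zero =>
    rw [Pi.single_eq_same]
    exact hf.sum_X_mul_pderiv
  | succ i =>
    rw [Pi.single_eq_of_ne i.succ_ne_zero]
    exact mem_jacobianSyzygies.1 (hρ i)

lemma det_submatrix_eq_zero_of_det_eulerMatrix_eq_zero [NoZeroDivisors R] {d : ℕ}
    (hd : (d : R) ≠ 0) (hf : f.IsHomogeneous d) (hf0 : f ≠ 0)
    (hρ : ∀ i, ρ i ∈ jacobianSyzygies f) (hdet : (eulerMatrix ρ).det = 0) (j : Fin (n + 1)) :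
    ((Matrix.of ρ).submatrix id j.succAbove).det = 0 := by
  have hdf : d • f ≠ 0 := by
    rw [← Nat.cast_smul_eq_nsmul R]
    exact smul_ne_zero hd hf0
  exact det_submatrix_succ_succAbove_eq_zero (eulerMatrix_mulVec_pderiv hf hρ) hdf hdet j

end AnyDimension

variable {f : MvPolynomial (Fin 4) R} {ρ1 ρ2 ρ : Fin 4 → MvPolynomial (Fin 4) R} {e1 e2 : ℕ}

lemma det_eulerMatrix_homogeneousComponent_eq_zero (h1 : ∀ i, (ρ1 i).IsHomogeneous e1)
    (h2 : ∀ i, (ρ2 i).IsHomogeneous e2) (hdet : (eulerMatrix ![ρ1, ρ2, ρ]).det = 0) (q : ℕ) :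
    (eulerMatrix ![ρ1, ρ2, homogeneousComponent q ∘ ρ]).det = 0 := by
  have hrows : ∀ k ≠ 3, ∀ j,
      (eulerMatrix ![ρ1, ρ2, ρ] k j).IsHomogeneous (![1, e1, e2, 0] k) := by
    intro k hk
    fin_cases k
    exacts [fun j => isHomogeneous_X R j, h1, h2, absurd rfl hk]
  have hupdate : eulerMatrix ![ρ1, ρ2, homogeneousComponent q ∘ ρ] =
      (eulerMatrix ![ρ1, ρ2, ρ]).updateRow 3 (homogeneousComponent q ∘ ρ) := by
    funext k
    fin_cases k <;> rfl
  rw [hupdate]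
  exact (det_updateRow_homogeneousComponent hrows q).trans (by rw [hdet, map_zero])

lemma det_eulerMatrix_eq_zero_of_mem_span [IsDomain R]
    (hρ : ρ ∈ Submodule.span (MvPolynomial (Fin 4) R) {ρ1, ρ2}) :
    (eulerMatrix ![ρ1, ρ2, ρ]).det = 0 := by
  obtain ⟨a, b, rfl⟩ := Submodule.mem_span_pair.1 hρ
  refine det_eq_zero_of_not_linearIndependent_rows (Fintype.not_linearIndependent_iff.2 ?_)
  refine ⟨![0, a, b, -1], ?_, 3, by simp⟩
  rw [Fin.sum_univ_four]
  change 0 • X + a • ρ1 + b • ρ2 + (-1 : MvPolynomial (Fin 4) R) • (a • ρ1 + b • ρ2) = 0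
  module

/-- Tameness of `f` with respect to `ρ1, ρ2` over any commutative ring of coefficients: every
homogeneous syzygy `ρ` for which all `3 × 3` minors of the matrix with rows `ρ1, ρ2, ρ` vanish
lies in `S ρ1 + S ρ2`. -/
def IsTamePair (f : MvPolynomial (Fin 4) R) (ρ1 ρ2 : Fin 4 → MvPolynomial (Fin 4) R) : Prop :=
  ∀ ρ ∈ jacobianSyzygies f, ∀ q : ℕ, (∀ i, (ρ i).IsHomogeneous q) →
    (∀ j : Fin 4, ((Matrix.of ![ρ1, ρ2, ρ]).submatrix id j.succAbove).det = 0) →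
    ρ ∈ Submodule.span (MvPolynomial (Fin 4) R) {ρ1, ρ2}

lemma IsTamePair.mem_span_of_det_eulerMatrix_eq_zero [NoZeroDivisors R] {d : ℕ}
    (htame : IsTamePair f ρ1 ρ2) (hd : (d : R) ≠ 0) (hf : f.IsHomogeneous d) (hf0 : f ≠ 0)
    (h1 : ρ1 ∈ jacobianSyzygies f) (hhom1 : ∀ i, (ρ1 i).IsHomogeneous e1)
    (h2 : ρ2 ∈ jacobianSyzygies f) (hhom2 : ∀ i, (ρ2 i).IsHomogeneous e2)
    (hρ : ρ ∈ jacobianSyzygies f) (hdet : (eulerMatrix ![ρ1, ρ2, ρ]).det = 0) :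
    ρ ∈ Submodule.span (MvPolynomial (Fin 4) R) {ρ1, ρ2} := by
  refine mem_of_forall_homogeneousComponent_comp_mem fun k => ?_
  have hk := homogeneousComponent_comp_mem_jacobianSyzygies hf hρ k
  have hrows : ∀ i, ![ρ1, ρ2, homogeneousComponent k ∘ ρ] i ∈ jacobianSyzygies f := by
    intro i
    fin_cases i
    exacts [h1, h2, hk]
  exact htame _ hk k (fun i => homogeneousComponent_isHomogeneous k (ρ i))
    (det_submatrix_eq_zero_of_det_eulerMatrix_eq_zero hd hf hf0 hrows
      (det_eulerMatrix_homogeneousComponent_eq_zero hhom1 hhom2 hdet k))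

end EulerMatrix

theorem thm_3_1_general {K : Type*} [Field K] {f : MvPolynomial (Fin 4) K} {d e1 e2 : ℕ} {e3 : ℤ}
    {ρ1 ρ2 : Fin 4 → MvPolynomial (Fin 4) K}
    (hd : (d : K) ≠ 0) (hf : f.IsHomogeneous d) (hf0 : f ≠ 0)
    (h1 : ρ1 ∈ jacobianSyzygies f) (h10 : ρ1 ≠ 0) (hhom1 : ∀ i, (ρ1 i).IsHomogeneous e1)
    (hmin1 : ∀ ρ ∈ jacobianSyzygies f, ∀ q : ℕ, ρ ≠ 0 → (∀ i, (ρ i).IsHomogeneous q) → e1 ≤ q)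
    (h2 : ρ2 ∈ jacobianSyzygies f) (hhom2 : ∀ i, (ρ2 i).IsHomogeneous e2)
    (h21 : ∀ a : MvPolynomial (Fin 4) K, ρ2 ≠ a • ρ1)
    (htame : IsTamePair f ρ1 ρ2) (he3 : e3 = d - 1 - e1 - e2) :
    (Function.Injective fun p : MvPolynomial (Fin 4) K × MvPolynomial (Fin 4) K =>
      p.1 • ρ1 + p.2 • ρ2) ∧
    (∀ (ρ : Fin 4 → MvPolynomial (Fin 4) K) (e : ℕ) (h : MvPolynomial (Fin 4) K),
      (∀ i, (ρ i).IsHomogeneous e) → (eulerMatrix ![ρ1, ρ2, ρ]).det = h * f →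
      h.IsHomogeneous (e - e3).toNat) ∧
    (∀ ρ ∈ jacobianSyzygies f, ∀ h : MvPolynomial (Fin 4) K,
      (eulerMatrix ![ρ1, ρ2, ρ]).det = h * f →
      (h = 0 ↔ ρ ∈ Submodule.span (MvPolynomial (Fin 4) K) {ρ1, ρ2})) := by
  refine ⟨fun p p' hpp' => ?_, fun ρ e h hρ hdet => ?_, fun ρ hρ h hdet => ⟨?_, fun hspan => ?_⟩⟩
  · have hindep := linearIndependent_pair_of_minimal_jacobianSyzygy hf h1 h10 hhom1 hmin1 h21
    exact Prod.ext_iff.2 (hindep.eq_of_pair hpp')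
  · have hrows : ∀ i j, (![ρ1, ρ2, ρ] i j).IsHomogeneous (![e1, e2, e] i) := by
      intro i
      fin_cases i
      exacts [hhom1, hhom2, hρ]
    -- For `e < e3` both sides are `0`, and `h = 0` because `det M` has degree below `d`.
    have hdeg : (e - e3).toNat = 1 + ∑ i, ![e1, e2, e] i - d := by
      simp only [Fin.sum_univ_three, cons_val]
      omega
    rw [hdeg]
    exact isHomogeneous_of_mul_right hf hf0 (hdet ▸ isHomogeneous_det_eulerMatrix hrows)
  · rintro rfl
    exact htame.mem_span_of_det_eulerMatrix_eq_zero hd hf hf0 h1 hhom1 h2 hhom2 hρ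
      (hdet.trans (zero_mul f))
  · rw [det_eulerMatrix_eq_zero_of_mem_span hspan] at hdet
    exact (mul_eq_zero.1 hdet.symm).resolve_right hf0

lemma isTamePair_of_tamePair {f : S4} {ρ1 ρ2 : Fin 4 → S4} (htame : TamePair f ρ1 ρ2) :
    IsTamePair f ρ1 ρ2 := fun ρ hρ q hhom hminors =>
  let ⟨a, b, hab⟩ := htame ρ hρ q hhom hminors
  Submodule.mem_span_pair.2 ⟨a, b, hab.symm⟩

/-- **Theorem 3.1.** For a tame surface there is an exact sequence
`0 → S(-e1) ⊕ S(-e2) → AR(f) → S(-e3)`: the map `(a,b) ↦ a·ρ1 + b·ρ2` is injective,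
`v'(ρ)` (defined by `det M(E,ρ1,ρ2,ρ) = v'(ρ)·f`) is homogeneous of degree `e - e3` on
syzygies of degree `e`, and `v'(ρ) = 0` iff `ρ ∈ S·ρ1 + S·ρ2`. -/
theorem thm_3_1 (f : S4) (d e1 e2 e3 : ℕ) (ρ1 ρ2 : Fin 4 → S4)
    (hd : 1 ≤ d) (hf : f.IsHomogeneous d) (hred : Squarefree f)
    (hmin : MinimalPair f ρ1 ρ2 e1 e2) (htame : TamePair f ρ1 ρ2)
    (he3 : e1 + e2 + e3 + 1 = d) :
    (Function.Injective fun p : S4 × S4 => p.1 • ρ1 + p.2 • ρ2) ∧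
    (∀ ρ ∈ AR4 f, ∀ (e : ℕ) (h : S4), VecHomog ρ e → (EMat ρ1 ρ2 ρ).det = h * f →
      h.IsHomogeneous (e - e3)) ∧
    (∀ ρ ∈ AR4 f, ∀ h : S4, (EMat ρ1 ρ2 ρ).det = h * f →
      (h = 0 ↔ ∃ a b : S4, ρ = a • ρ1 + b • ρ2)) := by
  obtain ⟨h1, h10, hhom1, hmin1, h2, hhom2, -, h21, -⟩ := hmin
  have hd' : (d : ℂ) ≠ 0 := Nat.cast_ne_zero.2 (Nat.one_le_iff_ne_zero.1 hd)
  have h := thm_3_1_general (e3 := e3) hd' hf hred.ne_zero h1 h10 hhom1 hmin1 h2 hhom2 h21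
    (isTamePair_of_tamePair htame) (by omega)
  simp only [Submodule.mem_span_pair, Int.toNat_sub, eq_comm (b := (_ : Fin 4 → S4))] at h
  exact ⟨h.1, fun ρ _ => h.2.1 ρ, h.2.2⟩
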